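/- The quasi-consecutive patterns 3̲1̲2̲4 and 2̲3̲1̲4 are des-Wilf-equivalent: for all n ≥ 1 and k ≥ 0, the number of permutations of length n avoiding 3̲1̲2̲4 with exactly k descents equals the number of permutations of length n avoiding 2̲3̲1̲4 with exactly k descents. -/

import Mathlib

open scoped Classical

/-- The number of descents of a permutation of `Fin n` (one-line notation `π 0, π 1, …`). -/
def des {n : ℕ} (π : Equiv.Perm (Fin n)) : ℕ :=
  (Finset.univ.filter fun i : Fin n =>
    ∃ h : (i : ℕ) + 1 < n, π ⟨(i : ℕ) + 1, h⟩ < π i).card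

/-- `π` avoids the quasi-consecutive pattern 3̲1̲2̲4: there are no (0-indexed) positions
`i` and `j` with `i + 3 ≤ j < n` such that π_{i+1} < π_{i+2} < π_i < π_j. -/
def AvoidsA {n : ℕ} (π : Equiv.Perm (Fin n)) : Prop :=
  ¬ ∃ (i j : ℕ) (hj : j < n) (hij : i + 3 ≤ j), π ⟨i + 1, by omega⟩ < π ⟨i + 2, by omega⟩ ∧ π ⟨i + 2, by omega⟩ < π ⟨i, by omega⟩ ∧ π ⟨i, by omega⟩ < π ⟨j, hj⟩

/-- `π` avoids the quasi-consecutive pattern 2̲3̲1̲4: there are no (0-indexed) positions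
`i` and `j` with `i + 3 ≤ j < n` such that π_{i+2} < π_i < π_{i+1} < π_j. -/
def AvoidsB {n : ℕ} (π : Equiv.Perm (Fin n)) : Prop :=
  ¬ ∃ (i j : ℕ) (hj : j < n) (hij : i + 3 ≤ j), π ⟨i + 2, by omega⟩ < π ⟨i, by omega⟩ ∧ π ⟨i, by omega⟩ < π ⟨i + 1, by omega⟩ ∧ π ⟨i + 1, by omega⟩ < π ⟨j, hj⟩

/-!
Split a word at its maximum `m` as `L m R`. An occurrence of `p` inside `L` is followed by the
larger letter `m`, and an occurrence that meets `m` is not followed by any letter larger than all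
of its own. Hence the word quasi-avoids `p` if and only if `L` avoids `p` consecutively and `R`
quasi-avoids `p`. Reverse-complementing `L` within its own set of letters exchanges consecutive
avoidance of `p` with that of the reverse-complement of `p`, and preserves the number of descents
of `L`, hence also the contribution of `L m` to the descents of the whole word. Doing this
recursively in `R` gives an involution on permutations. The reverse-complement of 312 is 231.
-/

section Words

variable {α β : Type*}

theorem infix_or_append_eq_of_append_eq_append_cons {s w t L R : List α} {m : α}
    (h : s ++ w ++ t = L ++ m :: R) (hm : m ∉ w) : w <:+: L ∨ ∃ s', s' ++ w ++ t = R := by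
  rw [List.append_assoc, List.append_eq_append_iff] at h
  rcases h with ⟨a, rfl, h⟩ | ⟨b, rfl, h⟩
  · rcases List.append_eq_append_iff.1 h with ⟨c, rfl, -⟩ | ⟨c, rfl, hc⟩
    · exact .inl ⟨s, c, by simp⟩
    · cases c with
      | nil => exact .inl ⟨s, [], by simp⟩
      | cons x c => grind
  · rcases List.cons_eq_append_iff.1 h with ⟨rfl, h⟩ | ⟨b', rfl, rfl⟩
    · cases w with
      | nil => exact .inl List.nil_infix
      | cons x w => grind
    · exact .inr ⟨b', List.append_assoc _ _ _⟩

variable [LinearOrder α] [LinearOrder β]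

/-- The permutation of `α` that exchanges the `i`-th smallest and the `i`-th largest element of `S`
for every `i` and fixes all elements outside `S`. -/
noncomputable def complement (S : Finset α) : Equiv.Perm α :=
  Fin.revPerm.extendDomain (S.orderIsoOfFin rfl).toEquiv

theorem complement_orderEmbOfFin (S : Finset α) (i : Fin S.card) :
    complement S (S.orderEmbOfFin rfl i) = S.orderEmbOfFin rfl i.rev :=
  Equiv.Perm.extendDomain_apply_image Fin.revPerm (S.orderIsoOfFin rfl).toEquiv i

theorem exists_orderEmbOfFin_eq {S : Finset α} {x : α} (hx : x ∈ S) :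
    ∃ i, S.orderEmbOfFin rfl i = x := by
  rwa [← Set.mem_range, Finset.range_orderEmbOfFin]

theorem complement_mem {S : Finset α} {x : α} (hx : x ∈ S) : complement S x ∈ S := by
  obtain ⟨i, rfl⟩ := exists_orderEmbOfFin_eq hx
  rw [complement_orderEmbOfFin]
  exact S.orderEmbOfFin_mem rfl _

theorem complement_involutive (S : Finset α) : Function.Involutive (complement S) := by
  intro x
  have hrev : (Fin.revPerm : Equiv.Perm (Fin S.card)) * Fin.revPerm = 1 := by
    ext i; simp
  rw [← Equiv.Perm.mul_apply, complement, Equiv.Perm.extendDomain_mul, hrev,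
    Equiv.Perm.extendDomain_one, Equiv.Perm.one_apply]

theorem strictAntiOn_complement (S : Finset α) : StrictAntiOn (complement S) S := by
  intro x hx y hy hxy
  obtain ⟨i, rfl⟩ := exists_orderEmbOfFin_eq hx
  obtain ⟨j, rfl⟩ := exists_orderEmbOfFin_eq hy
  simpa only [complement_orderEmbOfFin, OrderEmbedding.lt_iff_lt, Fin.rev_lt_rev] using hxy

theorem complement_eq_of_strictAntiOn {S : Finset α} {g : α → α} (hg : StrictAntiOn g S)
    (hgS : Set.MapsTo g S S) {x : α} (hx : x ∈ S) : complement S x = g x := by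
  have hmono : StrictMono fun i : Fin S.card => g (S.orderEmbOfFin rfl i.rev) := fun i j hij =>
    hg (S.orderEmbOfFin_mem rfl _) (S.orderEmbOfFin_mem rfl _) <| by
      simpa only [OrderEmbedding.lt_iff_lt, Fin.rev_lt_rev] using hij
  have hrank := Finset.orderEmbOfFin_unique rfl (fun i => hgS (S.orderEmbOfFin_mem rfl i.rev)) hmono
  obtain ⟨i, rfl⟩ := exists_orderEmbOfFin_eq hx
  rw [complement_orderEmbOfFin, ← congrFun hrank i.rev, Fin.rev_rev]

/-- The reverse-complement of a word, where the complement is taken within the set of letters that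
actually occur in it. -/
noncomputable def reverseComplement (l : List α) : List α :=
  (l.map (complement l.toFinset)).reverse

@[simp]
theorem toFinset_reverseComplement (l : List α) :
    (reverseComplement l).toFinset = l.toFinset := by
  ext x
  simp only [reverseComplement, List.mem_toFinset, List.mem_reverse, List.mem_map]
  constructor
  · rintro ⟨y, hy, rfl⟩
    exact List.mem_toFinset.1 (complement_mem (List.mem_toFinset.2 hy))
  · exact fun hx => ⟨complement l.toFinset x,
      List.mem_toFinset.1 (complement_mem (List.mem_toFinset.2 hx)), complement_involutive _ x⟩

@[simp]
theorem mem_reverseComplement {l : List α} {x : α} : x ∈ reverseComplement l ↔ x ∈ l := by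
  rw [← List.mem_toFinset, toFinset_reverseComplement, List.mem_toFinset]

@[simp]
theorem reverseComplement_reverseComplement (l : List α) :
    reverseComplement (reverseComplement l) = l := by
  rw [reverseComplement, toFinset_reverseComplement, reverseComplement, List.map_reverse,
    List.reverse_reverse, List.map_map, (complement_involutive _).comp_self, List.map_id]

theorem reverseComplement_perm {l : List α} (hl : l.Nodup) :
    (reverseComplement l).Perm l :=
  List.perm_of_nodup_nodup_toFinset_eq
    (List.nodup_reverse.2 (hl.map (complement l.toFinset).injective)) hl
    (toFinset_reverseComplement l)

theorem reverseComplement_eq_of_strictAntiOn {l : List α} {g : α → α}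
    (hg : StrictAntiOn g {x | x ∈ l}) (hgl : Set.MapsTo g {x | x ∈ l} {x | x ∈ l}) :
    reverseComplement l = (l.map g).reverse := by
  rw [← List.coe_toFinset] at hg hgl
  rw [reverseComplement, List.map_congr_left fun x hx =>
    complement_eq_of_strictAntiOn hg hgl (List.mem_toFinset.2 hx)]

/-- The number of descents of a word. -/
def descents : List α → ℕ
  | a :: b :: l => (if b < a then 1 else 0) + descents (b :: l)
  | _ => 0

theorem descents_append_cons (L : List α) (m : α) (R : List α) :
    descents (L ++ m :: R) = descents (L ++ [m]) + descents (m :: R) := by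
  induction L with
  | nil => simp [descents]
  | cons a L ih => cases L <;> simp_all [descents, add_assoc]

theorem descents_append_singleton {L : List α} {m : α} (hL : ∀ x ∈ L, x < m) :
    descents (L ++ [m]) = descents L := by
  induction L with
  | nil => simp [descents]
  | cons a L ih => cases L <;> simp_all [descents, le_of_lt]

theorem descents_cons {m : α} {R : List α} (hR : ∀ x ∈ R, x < m) :
    descents (m :: R) = (if R.length = 0 then 0 else 1) + descents R := by
  cases R <;> simp_all [descents]

theorem descents_reverse_map {f : α → β} {l : List α} (hf : StrictAntiOn f {x | x ∈ l}) :
    descents (l.map f).reverse = descents l := by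
  induction l with
  | nil => simp [descents]
  | cons a l ih =>
    cases l with
    | nil => simp [descents]
    | cons b l =>
      have hab : f a < f b ↔ b < a := hf.lt_iff_gt (by simp) (by simp)
      have htail := ih (hf.mono fun x hx => List.mem_cons_of_mem a hx)
      simp only [List.map_cons, List.reverse_cons] at htail ⊢
      rw [List.append_assoc, List.singleton_append, descents_append_cons, htail]
      simp only [descents, hab, add_zero]
      exact add_comm _ _

theorem descents_reverseComplement (l : List α) :
    descents (reverseComplement l) = descents l :=
  descents_reverse_map <| by simpa using strictAntiOn_complement l.toFinset

/-- The word `w` is an occurrence of the pattern `p`, i.e. it is order-isomorphic to `p`. -/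
def IsOccurrence (p : List β) (w : List α) : Prop :=
  ∃ f : β → α, StrictMonoOn f {x | x ∈ p} ∧ p.map f = w

theorem IsOccurrence.length_eq {p : List β} {w : List α} (h : IsOccurrence p w) :
    w.length = p.length := by
  obtain ⟨f, -, rfl⟩ := h
  exact List.length_map f

/-- A word avoids `p` consecutively if no factor of it is an occurrence of `p`. -/
def ConsecutivelyAvoids (p : List β) (l : List α) : Prop :=
  ∀ w, w <:+: l → ¬ IsOccurrence p w

/-- A word quasi-avoids `p` if no factor of it that is an occurrence of `p` is followed, at any
distance, by a letter larger than the whole factor. For `p` a permutation of `1, …, r` this is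
avoidance of the quasi-consecutive pattern `p (r + 1)` whose first `r` letters are underlined. -/
def QuasiAvoids (p : List β) (l : List α) : Prop :=
  ∀ s w t, s ++ w ++ t = l → IsOccurrence p w → ∀ d ∈ t, ∃ x ∈ w, d ≤ x

theorem IsOccurrence.reverse_map {γ : Type*} [LinearOrder γ] {p : List β} {w : List α}
    (h : IsOccurrence (reverseComplement p) w) {g : α → γ} (hg : StrictAntiOn g {x | x ∈ w}) :
    IsOccurrence p (w.map g).reverse := by
  obtain ⟨f, hf, rfl⟩ := h
  have hc : StrictAntiOn (complement p.toFinset) {x | x ∈ p} := by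
    simpa using strictAntiOn_complement p.toFinset
  have hcp : Set.MapsTo (complement p.toFinset) {x | x ∈ p} {x | x ∈ reverseComplement p} :=
    fun x hx => by simpa using complement_mem (List.mem_toFinset.2 hx)
  refine ⟨g ∘ f ∘ complement p.toFinset,
    hg.comp (hf.comp_strictAntiOn hc hcp) fun x hx => List.mem_map_of_mem (hcp hx), ?_⟩
  simp [reverseComplement]

theorem consecutivelyAvoids_reverseComplement {p : List β} {l : List α}
    (h : ConsecutivelyAvoids p l) :
    ConsecutivelyAvoids (reverseComplement p) (reverseComplement l) := by
  intro w hw hocc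
  have hanti : StrictAntiOn (complement l.toFinset) {x | x ∈ w} :=
    (strictAntiOn_complement l.toFinset).mono fun x hx => by simpa using hw.subset hx
  refine h _ ?_ (hocc.reverse_map hanti)
  have hfactor := List.reverse_infix.2 (hw.map (complement l.toFinset))
  simpa [reverseComplement, (complement_involutive _).comp_self] using hfactor

theorem consecutivelyAvoids_reverseComplement_iff {p : List β} {l : List α} :
    ConsecutivelyAvoids (reverseComplement p) (reverseComplement l) ↔ ConsecutivelyAvoids p l :=
  ⟨fun h => by simpa using consecutivelyAvoids_reverseComplement h,
    consecutivelyAvoids_reverseComplement⟩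

theorem quasiAvoids_nil (p : List β) : QuasiAvoids p ([] : List α) := by
  intro s w t hswt
  simp [(List.append_eq_nil_iff.1 hswt).2]

theorem quasiAvoids_append_cons (p : List β) {L : List α} {m : α} {R : List α}
    (hL : ∀ x ∈ L, x < m) (hR : ∀ x ∈ R, x ≤ m) :
    QuasiAvoids p (L ++ m :: R) ↔ ConsecutivelyAvoids p L ∧ QuasiAvoids p R := by
  constructor
  · refine fun h => ⟨?_, ?_⟩
    · rintro w ⟨s, t, rfl⟩ hocc
      obtain ⟨x, hx, hmx⟩ := h s w (t ++ m :: R) (by simp) hocc m (by simp)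
      exact hmx.not_gt (hL x (by simp [hx]))
    · rintro s w t rfl
      exact h (L ++ m :: s) w t (by simp)
  · rintro ⟨hcons, hquasi⟩ s w t hswt hocc d hd
    by_cases hmw : m ∈ w
    · have hdm : d ∈ L ++ m :: R := hswt ▸ List.mem_append_right _ hd
      exact ⟨m, hmw, by grind⟩
    · rcases infix_or_append_eq_of_append_eq_append_cons hswt hmw with hwL | ⟨s', hs'⟩
      · exact absurd hocc (hcons w hwL)
      · exact hquasi s' w t hs' hocc d hd

theorem max_split_induction {motive : List α → Prop} (nil : motive [])
    (append_cons : ∀ L m R, (∀ x ∈ L, x < m) → (∀ x ∈ R, x ≤ m) → motive R → motive (L ++ m :: R))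
    (l : List α) : motive l := by
  induction hn : l.length using Nat.strong_induction_on generalizing l with
  | _ n ih =>
    subst hn
    rcases hmax : l.max? with - | m
    · rwa [List.max?_eq_none_iff.1 hmax]
    · rw [List.max?_eq_some_iff] at hmax
      obtain ⟨hm, hle⟩ := hmax
      obtain ⟨L, R, rfl, hmL⟩ := List.eq_append_cons_of_mem hm
      refine append_cons L m R (fun x hx => ?_) (fun x hx => hle x (by simp [hx]))
        (ih _ (by simp only [List.length_append, List.length_cons]; omega) R rfl)
      exact (hle x (by simp [hx])).lt_of_ne (by rintro rfl; exact hmL hx)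

/-- Reverse-complements each maximal factor of `l` that contains no weak right-to-left maximum, and
keeps these maxima in place. They are found from left to right: the first one is the first
occurrence of the maximum `m` of `l`, the others are those of the word to the right of it. -/
noncomputable def blockReverseComplement (l : List α) : List α :=
  match _ : l.max? with
  | none => []
  | some m => reverseComplement (l.take (l.idxOf m)) ++
      m :: blockReverseComplement (l.drop (l.idxOf m + 1))
termination_by l.length
decreasing_by
  have := List.length_pos_of_mem (List.max?_eq_some_iff.1 ‹l.max? = some m›).1
  rw [List.length_drop]
  omega

@[simp]
theorem blockReverseComplement_nil : blockReverseComplement ([] : List α) = [] := by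
  rw [blockReverseComplement]; rfl

theorem blockReverseComplement_append_cons {L : List α} {m : α} {R : List α}
    (hL : ∀ x ∈ L, x < m) (hR : ∀ x ∈ R, x ≤ m) :
    blockReverseComplement (L ++ m :: R) =
      reverseComplement L ++ m :: blockReverseComplement R := by
  have hmax : (L ++ m :: R).max? = some m := by
    rw [List.max?_eq_some_iff]
    grind
  have hidx : (L ++ m :: R).idxOf m = L.length := by
    rw [List.idxOf_append_of_notMem fun h => (hL m h).false, List.idxOf_cons_self, add_zero]
  rw [blockReverseComplement]
  split
  · simp_all
  · simp_all

@[simp]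
theorem mem_blockReverseComplement {l : List α} {x : α} :
    x ∈ blockReverseComplement l ↔ x ∈ l := by
  induction l using max_split_induction with
  | nil => simp
  | append_cons L m R hL hR ih => simp [blockReverseComplement_append_cons hL hR, ih]

@[simp]
theorem blockReverseComplement_blockReverseComplement (l : List α) :
    blockReverseComplement (blockReverseComplement l) = l := by
  induction l using max_split_induction with
  | nil => simp
  | append_cons L m R hL hR ih =>
    rw [blockReverseComplement_append_cons hL hR,
      blockReverseComplement_append_cons (by simpa using hL) (by simpa using hR),
      reverseComplement_reverseComplement, ih]

theorem quasiAvoids_blockReverseComplement_iff {p : List β} {l : List α} :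
    QuasiAvoids (reverseComplement p) (blockReverseComplement l) ↔ QuasiAvoids p l := by
  induction l using max_split_induction with
  | nil => simp [quasiAvoids_nil]
  | append_cons L m R hL hR ih =>
    rw [blockReverseComplement_append_cons hL hR,
      quasiAvoids_append_cons _ (by simpa using hL) (by simpa using hR),
      quasiAvoids_append_cons p hL hR, consecutivelyAvoids_reverseComplement_iff, ih]

theorem blockReverseComplement_perm {l : List α} (hl : l.Nodup) :
    (blockReverseComplement l).Perm l := by
  induction l using max_split_induction with
  | nil => simp
  | append_cons L m R hL hR ih =>
    rw [blockReverseComplement_append_cons hL hR]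
    obtain ⟨hLnodup, hmR, -⟩ := List.nodup_append.1 hl
    exact (reverseComplement_perm hLnodup).append ((ih hmR.of_cons).cons m)

theorem descents_blockReverseComplement {l : List α} (hl : l.Nodup) :
    descents (blockReverseComplement l) = descents l := by
  induction l using max_split_induction with
  | nil => simp
  | append_cons L m R hL hR ih =>
    obtain ⟨-, hmR, -⟩ := List.nodup_append.1 hl
    obtain ⟨hm, hRnodup⟩ := List.nodup_cons.1 hmR
    have hRm : ∀ x ∈ R, x < m := fun x hx =>
      (hR x hx).lt_of_ne (by rintro rfl; exact hm hx)
    have hlength := (blockReverseComplement_perm hRnodup).length_eq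
    rw [blockReverseComplement_append_cons hL hR, descents_append_cons, descents_append_cons L,
      descents_append_singleton (by simpa using hL), descents_append_singleton hL,
      descents_cons (by simpa using hRm), descents_cons hRm, descents_reverseComplement, hlength,
      ih hRnodup]

end Words

section Permutations

variable {n : ℕ} {α β : Type*}

theorem take_three_drop_ofFn (g : Fin n → α) {i : ℕ} (hi : i + 2 < n) :
    ((List.ofFn g).drop i).take 3 = [g ⟨i, by omega⟩, g ⟨i + 1, by omega⟩, g ⟨i + 2, hi⟩] := by
  apply List.ext_getElem
  · simp only [List.length_take, List.length_drop, List.length_ofFn, List.length_cons,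
      List.length_nil]
    omega
  · intro k _ hk
    replace hk : k < 3 := hk
    interval_cases k <;> simp

variable [LinearOrder α] [LinearOrder β]

theorem descents_ofFn (g : Fin (n + 1) → α) :
    descents (List.ofFn g) =
      (Finset.univ.filter fun i : Fin n => g i.succ < g i.castSucc).card := by
  induction n with
  | zero => simp [descents]
  | succ n ih =>
    have htail := ih fun i => g i.succ
    rw [List.ofFn_succ] at htail
    rw [List.ofFn_succ, List.ofFn_succ, descents, htail, Fin.card_filter_univ_succ, add_comm]
    simp only [Fin.castSucc_zero, Fin.castSucc_succ]
    split_ifs <;> rfl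

theorem des_eq_descents (π : Equiv.Perm (Fin n)) : des π = descents (List.ofFn π) := by
  cases n with
  | zero => simp [des, descents]
  | succ n =>
    rw [descents_ofFn, des, Finset.card_filter, Finset.card_filter, Fin.sum_univ_castSucc]
    simp [← Fin.succ_mk]

theorem isOccurrence_312_iff {a b c : α} :
    IsOccurrence [3, 1, 2] [a, b, c] ↔ b < c ∧ c < a := by
  constructor
  · rintro ⟨f, hf, h⟩
    simp only [List.map_cons, List.map_nil, List.cons.injEq, and_true] at h
    obtain ⟨rfl, rfl, rfl⟩ := h
    exact ⟨hf (by simp) (by simp) (by simp), hf (by simp) (by simp) (by simp)⟩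
  · rintro ⟨hbc, hca⟩
    exact ⟨fun | 1 => b | 2 => c | _ => a,
      by simp [StrictMonoOn, hbc, hca, hbc.trans hca], rfl⟩

theorem isOccurrence_231_iff {a b c : α} :
    IsOccurrence [2, 3, 1] [a, b, c] ↔ c < a ∧ a < b := by
  constructor
  · rintro ⟨f, hf, h⟩
    simp only [List.map_cons, List.map_nil, List.cons.injEq, and_true] at h
    obtain ⟨rfl, rfl, rfl⟩ := h
    exact ⟨hf (by simp) (by simp) (by simp), hf (by simp) (by simp) (by simp)⟩
  · rintro ⟨hca, hab⟩
    exact ⟨fun | 1 => c | 2 => a | _ => b,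
      by simp [StrictMonoOn, hca, hab, hca.trans hab], rfl⟩

theorem reverseComplement_312 : reverseComplement [3, 1, 2] = [2, 3, 1] := by
  rw [reverseComplement_eq_of_strictAntiOn (g := fun x => 4 - x)]
  · rfl
  · simp [StrictAntiOn]
  · simp [Set.MapsTo]

theorem quasiAvoids_iff_getElem {p : List β} {l : List α} :
    QuasiAvoids p l ↔ ∀ i j (hj : j < l.length), i + p.length ≤ j →
      IsOccurrence p ((l.drop i).take p.length) → ∃ x ∈ (l.drop i).take p.length, l[j] ≤ x := by
  constructor
  · intro h i j hj hij hocc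
    refine h (l.take i) _ (l.drop (i + p.length)) ?_ hocc _ ?_
    · simp [← List.drop_drop]
    · rw [List.mem_drop_iff_getElem]
      exact ⟨j - (i + p.length), by omega, by simp [hij]⟩
  · rintro h s w t rfl hocc d hd
    obtain ⟨k, hk, rfl⟩ := List.getElem_of_mem hd
    have hw : ((s ++ w ++ t).drop s.length).take p.length = w := by simp [← hocc.length_eq]
    have hletter := h s.length ((s ++ w).length + k)
      (by simp only [List.length_append]; omega) (by simp [hocc.length_eq])
    rw [hw] at hletter
    simpa only [List.getElem_append_right (Nat.le_add_right (s ++ w).length k),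
      Nat.add_sub_cancel_left] using hletter hocc

theorem quasiAvoids_ofFn_iff {p : List β} (hp : p.length = 3) (g : Fin n → α) :
    QuasiAvoids p (List.ofFn g) ↔ ∀ (i j : ℕ) (hj : j < n) (hij : i + 3 ≤ j),
      IsOccurrence p [g ⟨i, by omega⟩, g ⟨i + 1, by omega⟩, g ⟨i + 2, by omega⟩] →
        g ⟨j, hj⟩ ≤ g ⟨i, by omega⟩ ∨ g ⟨j, hj⟩ ≤ g ⟨i + 1, by omega⟩ ∨
          g ⟨j, hj⟩ ≤ g ⟨i + 2, by omega⟩ := by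
  simp only [quasiAvoids_iff_getElem, hp, List.length_ofFn, List.getElem_ofFn]
  refine forall₄_congr fun i j hj hij => ?_
  simp [take_three_drop_ofFn g (show i + 2 < n by omega)]

theorem avoidsA_iff (π : Equiv.Perm (Fin n)) :
    AvoidsA π ↔ QuasiAvoids [3, 1, 2] (List.ofFn π) := by
  simp only [AvoidsA, quasiAvoids_ofFn_iff (p := [3, 1, 2]) rfl, isOccurrence_312_iff]
  grind

theorem avoidsB_iff (π : Equiv.Perm (Fin n)) :
    AvoidsB π ↔ QuasiAvoids [2, 3, 1] (List.ofFn π) := by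
  simp only [AvoidsB, quasiAvoids_ofFn_iff (p := [2, 3, 1]) rfl, isOccurrence_231_iff]
  grind

theorem exists_perm_ofFn_eq {l : List (Fin n)} (hl : l.Perm (List.finRange n)) :
    ∃ π : Equiv.Perm (Fin n), List.ofFn π = l := by
  have hlength : l.length = n := by simpa using hl.length_eq
  have hinj : Function.Injective fun i : Fin n => l.get (i.cast hlength.symm) :=
    (hl.nodup_iff.2 (List.nodup_finRange n)).injective_get.comp (Fin.cast_injective _)
  exact ⟨.ofBijective _ (Finite.injective_iff_bijective.1 hinj),
    List.ext_getElem (by simp [hlength]) (by simp)⟩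

theorem exists_perm_ofFn_eq_blockReverseComplement (π : Equiv.Perm (Fin n)) :
    ∃ σ : Equiv.Perm (Fin n), List.ofFn σ = blockReverseComplement (List.ofFn π) :=
  exists_perm_ofFn_eq <| (blockReverseComplement_perm (List.nodup_ofFn.2 π.injective)).trans <|
    List.ofFn_id n ▸ π.ofFn_comp_perm id

/-- The action of `blockReverseComplement` on permutations in one-line notation; it is the
bijection behind the equidistribution. -/
noncomputable def blockReverseComplementPerm (π : Equiv.Perm (Fin n)) : Equiv.Perm (Fin n) :=
  (exists_perm_ofFn_eq_blockReverseComplement π).choose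

theorem ofFn_blockReverseComplementPerm (π : Equiv.Perm (Fin n)) :
    List.ofFn (blockReverseComplementPerm π) = blockReverseComplement (List.ofFn π) :=
  (exists_perm_ofFn_eq_blockReverseComplement π).choose_spec

theorem blockReverseComplementPerm_involutive :
    Function.Involutive (blockReverseComplementPerm (n := n)) := fun π =>
  DFunLike.coe_injective <| List.ofFn_injective <| by
    rw [ofFn_blockReverseComplementPerm, ofFn_blockReverseComplementPerm,
      blockReverseComplement_blockReverseComplement]

theorem des_blockReverseComplementPerm (π : Equiv.Perm (Fin n)) :
    des (blockReverseComplementPerm π) = des π := by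
  rw [des_eq_descents, des_eq_descents, ofFn_blockReverseComplementPerm,
    descents_blockReverseComplement (List.nodup_ofFn.2 π.injective)]

end Permutations

theorem statement12_general {β : Type*} [LinearOrder β] (p : List β) (n k : ℕ) :
    Nat.card {π : Equiv.Perm (Fin n) // QuasiAvoids p (List.ofFn π) ∧ des π = k} =
      Nat.card {π : Equiv.Perm (Fin n) //
        QuasiAvoids (reverseComplement p) (List.ofFn π) ∧ des π = k} :=
  Nat.card_congr <| blockReverseComplementPerm_involutive.toPerm.subtypeEquiv fun π => by
    rw [Function.Involutive.coe_toPerm, ofFn_blockReverseComplementPerm,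
      quasiAvoids_blockReverseComplement_iff, des_blockReverseComplementPerm]

/-- The quasi-consecutive patterns 3̲1̲2̲4 and 2̲3̲1̲4 are des-Wilf-equivalent. -/
theorem statement12 (n : ℕ) (hn : 1 ≤ n) (k : ℕ) :
    Nat.card {π : Equiv.Perm (Fin n) // AvoidsA π ∧ des π = k} =
      Nat.card {π : Equiv.Perm (Fin n) // AvoidsB π ∧ des π = k} := by
  simpa only [avoidsA_iff, avoidsB_iff, ← reverseComplement_312] using
    statement12_general [3, 1, 2] n k
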